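/- arXiv:2502.14663 — 4 statements merged into one kernel-verified Lean document; each statement's English description precedes it below -/
import Mathlib

section
/- Let G be a finite group, n a positive integer, and π : G → GL(ℂⁿ) a unitary representation. Let Ω ⊆ G be a finite sampling set of size m ≥ 1, and suppose the constant C > 0 satisfies: for every y ∈ ℂⁿ and every coordinate index j ∈ {1,…,n}, Σ_{ω∈Ω} |(π(ω)y)_j|² ≤ C·‖y‖₂². For x ∈ ℂⁿ let A_x ∈ ℂ^{m×n} be the matrix whose row indexed by ω ∈ Ω is (1/√m) times the conjugate transpose of π(ω)*x (so (A_x y)_ω = (1/√m)·Σ_j conj((π(ω)*x)_j)·y_j). Then for every s-sparse vector x ∈ ℂⁿ (at most s nonzero entries), the operator norm of A_x from ℓ² to ℓ² satisfies ‖A_x‖_{2→2} ≤ √(s·C/m)·‖x‖₂. -/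
open scoped ComplexConjugate

/-- The ℓ²-norm of a finitely supported complex vector. -/
noncomputable def l2norm {ι : Type*} [Fintype ι] (v : ι → ℂ) : ℝ :=
  Real.sqrt (∑ i, ‖v i‖ ^ 2)

/-- Number of nonzero entries of a vector. -/
noncomputable def sparsity {n : ℕ} (x : Fin n → ℂ) : ℕ :=
  (Set.toFinite (Function.support x)).toFinset.card

/-- The matrix `A_x = (1/√m) · R_Ω (π(g)* x)*_{g∈G}`, whose row indexed by `ω ∈ Ω`
is `(1/√m)` times the conjugate transpose of `π(ω)* x`. -/
noncomputable def Amat {G : Type*} [Group G] [Fintype G] {n : ℕ}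
    (π : G →* Matrix.unitaryGroup (Fin n) ℂ) (Ω : Finset G) (x : Fin n → ℂ) :
    Matrix ↥Ω (Fin n) ℂ :=
  fun ω j =>
    (1 / (Real.sqrt Ω.card : ℂ)) *
      conj ((((π (ω : G) : Matrix (Fin n) (Fin n) ℂ)).conjTranspose.mulVec x) j)

/-!
The matrix `A_x` depends conjugate-linearly on `x`, so `A_x = ∑ j, conj (x j) • A_{e_j}`. The
hypothesis on `C` says exactly that `‖A_{e_j}‖ ≤ √(C / m)` for every `j`, whence
`‖A_x‖ ≤ √(C / m) * ‖x‖₁`, and Cauchy–Schwarz on the support gives `‖x‖₁ ≤ √s * ‖x‖₂`.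
-/

section SparseCombinations

variable {κ E : Type*} [Fintype κ] [SeminormedAddCommGroup E]

theorem sum_norm_le_sqrt_ncard_support_mul_norm (x : κ → E) :
    ∑ k, ‖x k‖ ≤ √(Function.support x).ncard * ‖WithLp.toLp 2 x‖ := by
  classical
  have sum_eq_sum_support : ∑ k, ‖x k‖ = ∑ k ∈ (Function.support x).toFinset, ‖x k‖ := by
    refine (Finset.sum_subset (Finset.subset_univ _) fun k _ hk => ?_).symm
    rw [Set.mem_toFinset, Function.notMem_support] at hk
    rw [hk, norm_zero]
  rw [sum_eq_sum_support, Set.ncard_eq_toFinset_card', PiLp.norm_eq_of_L2,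
    ← Real.sqrt_mul (Nat.cast_nonneg _)]
  refine Real.le_sqrt_of_sq_le (sq_sum_le_card_mul_sum_sq.trans ?_)
  gcongr
  exact Finset.subset_univ _

theorem norm_sum_smul_le_sqrt_ncard_support_mul_norm {R : Type*} [NormedRing R] [Module R E]
    [IsBoundedSMul R E] (a : κ → R) {v : κ → E} {B : ℝ} (hB : 0 ≤ B) (hv : ∀ k, ‖v k‖ ≤ B) :
    ‖∑ k, a k • v k‖ ≤ √(Function.support a).ncard * B * ‖WithLp.toLp 2 a‖ :=
  calc ‖∑ k, a k • v k‖
    _ ≤ ∑ k, ‖a k‖ * B :=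
        norm_sum_le_of_le _ fun k _ => (norm_smul_le _ _).trans (by gcongr; exact hv k)
    _ = (∑ k, ‖a k‖) * B := (Finset.sum_mul ..).symm
    _ ≤ √(Function.support a).ncard * ‖WithLp.toLp 2 a‖ * B := by
        gcongr; exact sum_norm_le_sqrt_ncard_support_mul_norm a
    _ = √(Function.support a).ncard * B * ‖WithLp.toLp 2 a‖ := mul_right_comm ..

end SparseCombinations

section CoeffMatrix

open scoped Matrix

variable {𝕜 ι κ l : Type*} [RCLike 𝕜] [Fintype κ]

/-- The matrix of the map `y ↦ (⟪x, W i y⟫)_i` listing the matrix coefficients of a family `W` of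
matrices; its `i`-th row is the conjugate transpose of `(W i)ᴴ *ᵥ x`. A normalization such as
`1 / √m` is absorbed into `W`. -/
def coeffMatrix (W : ι → Matrix κ l 𝕜) (x : κ → 𝕜) : Matrix ι l 𝕜 :=
  Matrix.of fun i => star ((W i)ᴴ *ᵥ x)

theorem coeffMatrix_eq_sum_smul (W : ι → Matrix κ l 𝕜) (x : κ → 𝕜) :
    coeffMatrix W x = ∑ k, star (x k) • Matrix.of fun i => W i k := by
  ext i j
  simp [coeffMatrix, Matrix.star_mulVec, Matrix.vecMul, dotProduct, Matrix.sum_apply]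

end CoeffMatrix

section OperatorNorm

open scoped Matrix Matrix.Norms.L2Operator

variable {𝕜 ι κ l : Type*} [RCLike 𝕜] [Fintype ι] [Fintype κ] [Fintype l] [DecidableEq l]

theorem l2_opNorm_le_sqrt {A : Matrix ι l 𝕜} {K : ℝ}
    (hA : ∀ y, ‖WithLp.toLp 2 (A *ᵥ y)‖ ^ 2 ≤ K * ‖WithLp.toLp 2 y‖ ^ 2) : ‖A‖ ≤ √K := by
  rw [Matrix.l2_opNorm_def]
  refine ContinuousLinearMap.opNorm_le_bound _ K.sqrt_nonneg fun y => ?_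
  calc ‖WithLp.toLp 2 (A *ᵥ y)‖
    _ ≤ √(K * ‖y‖ ^ 2) := Real.le_sqrt_of_sq_le (hA y)
    _ = √K * ‖y‖ := by rw [Real.sqrt_mul' _ (sq_nonneg _), Real.sqrt_sq (norm_nonneg _)]

theorem stmt0_general (W : ι → Matrix κ l 𝕜) {K : ℝ}
    (hW : ∀ (y : l → 𝕜) (k : κ), ∑ i, ‖(W i *ᵥ y) k‖ ^ 2 ≤ K * ‖WithLp.toLp 2 y‖ ^ 2)
    {x : κ → 𝕜} {s : ℕ} (hx : (Function.support x).ncard ≤ s) :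
    ‖coeffMatrix W x‖ ≤ √(s * K) * ‖WithLp.toLp 2 x‖ := by
  have norm_slice_le (k : κ) : ‖Matrix.of fun i => W i k‖ ≤ √K :=
    l2_opNorm_le_sqrt fun y => by
      rw [EuclideanSpace.norm_sq_eq]
      exact hW y k
  have support_star : Function.support (star x) = Function.support x := by
    ext; simp
  have norm_star : ‖WithLp.toLp 2 (star x)‖ = ‖WithLp.toLp 2 x‖ := by
    simp [EuclideanSpace.norm_eq]
  calc ‖coeffMatrix W x‖
    _ ≤ √(Function.support x).ncard * √K * ‖WithLp.toLp 2 x‖ := by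
        rw [coeffMatrix_eq_sum_smul, ← support_star, ← norm_star]
        exact norm_sum_smul_le_sqrt_ncard_support_mul_norm (star x) K.sqrt_nonneg norm_slice_le
    _ ≤ √s * √K * ‖WithLp.toLp 2 x‖ := by gcongr
    _ = √(s * K) * ‖WithLp.toLp 2 x‖ := by rw [Real.sqrt_mul s.cast_nonneg]

end OperatorNorm

section Amat

open scoped Matrix Matrix.Norms.L2Operator

theorem l2norm_eq_norm {ι : Type*} [Fintype ι] (v : ι → ℂ) : l2norm v = ‖WithLp.toLp 2 v‖ :=
  (EuclideanSpace.norm_eq _).symm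

theorem sparsity_eq_ncard_support {n : ℕ} (x : Fin n → ℂ) :
    sparsity x = (Function.support x).ncard :=
  (Set.ncard_eq_toFinset_card _).symm

theorem l2norm_mulVec_le_of_l2_opNorm_le {ι l : Type*} [Fintype ι] [Fintype l] [DecidableEq l]
    {A : Matrix ι l ℂ} {c : ℝ} (hA : ‖A‖ ≤ c) (y : l → ℂ) :
    l2norm (A *ᵥ y) ≤ c * l2norm y := by
  rw [l2norm_eq_norm, l2norm_eq_norm]
  exact (A.l2_opNorm_mulVec (WithLp.toLp 2 y)).trans (by gcongr)

theorem sum_norm_normalized_mulVec_sq {G κ l : Type*} [Fintype l] (U : G → Matrix κ l ℂ)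
    (Ω : Finset G) (y : l → ℂ) (k : κ) :
    ∑ ω : Ω, ‖(((1 / (√Ω.card : ℂ)) • U ω) *ᵥ y) k‖ ^ 2 =
      (∑ ω ∈ Ω, ‖(U ω *ᵥ y) k‖ ^ 2) / Ω.card := by
  have norm_scale_sq : ‖1 / (√Ω.card : ℂ)‖ ^ 2 = 1 / Ω.card := by
    rw [norm_div, norm_one, Complex.norm_real, div_pow, one_pow, Real.norm_eq_abs, sq_abs,
      Real.sq_sqrt Ω.card.cast_nonneg]
  simp only [Matrix.smul_mulVec, Pi.smul_apply, norm_smul, mul_pow, norm_scale_sq]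
  rw [← Finset.mul_sum, Finset.sum_coe_sort Ω fun ω => ‖(U ω *ᵥ y) k‖ ^ 2, one_div_mul_eq_div]

theorem Amat_eq_coeffMatrix {G : Type*} [Group G] [Fintype G] {n : ℕ}
    (π : G →* Matrix.unitaryGroup (Fin n) ℂ) (Ω : Finset G) (x : Fin n → ℂ) :
    Amat π Ω x =
      coeffMatrix (fun ω : Ω => (1 / (√Ω.card : ℂ)) • (π ω : Matrix (Fin n) (Fin n) ℂ)) x := by
  ext ω j
  simp [Amat, coeffMatrix, Matrix.conjTranspose_smul, Matrix.smul_mulVec]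

theorem l2_opNorm_Amat_le {G : Type*} [Group G] [Fintype G] {n s : ℕ}
    (π : G →* Matrix.unitaryGroup (Fin n) ℂ) (Ω : Finset G) {C : ℝ}
    (hC : ∀ (y : Fin n → ℂ) (j : Fin n),
      ∑ ω ∈ Ω, ‖((π ω : Matrix (Fin n) (Fin n) ℂ) *ᵥ y) j‖ ^ 2 ≤ C * l2norm y ^ 2)
    {x : Fin n → ℂ} (hx : sparsity x ≤ s) :
    ‖Amat π Ω x‖ ≤ √(s * C / Ω.card) * l2norm x := by
  rw [Amat_eq_coeffMatrix, l2norm_eq_norm, mul_div_assoc]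
  refine stmt0_general _ (fun y j => ?_) (sparsity_eq_ncard_support x ▸ hx)
  rw [sum_norm_normalized_mulVec_sq fun g => (π g : Matrix (Fin n) (Fin n) ℂ),
    ← l2norm_eq_norm, div_mul_eq_mul_div]
  gcongr
  exact hC y j

end Amat

theorem stmt0 {G : Type*} [Group G] [Fintype G] {n m s : ℕ} (hn : 1 ≤ n)
    (π : G →* Matrix.unitaryGroup (Fin n) ℂ) (Ω : Finset G)
    (hm : Ω.card = m) (hm1 : 1 ≤ m)
    (C : ℝ) (hCpos : 0 < C)
    (hC : ∀ (y : Fin n → ℂ) (j : Fin n),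
      ∑ ω ∈ Ω, ‖((π ω : Matrix (Fin n) (Fin n) ℂ).mulVec y) j‖ ^ 2 ≤ C * (l2norm y) ^ 2)
    (x : Fin n → ℂ) (hx : sparsity x ≤ s) :
    ∀ y : Fin n → ℂ,
      l2norm ((Amat π Ω x).mulVec y) ≤ Real.sqrt (s * C / m) * l2norm x * l2norm y := by
  subst hm
  exact l2norm_mulVec_le_of_l2_opNorm_le (l2_opNorm_Amat_le π Ω hC hx)
end

section
/- Let G be a finite group, n a positive integer, and π : G → GL(ℂⁿ) a unitary representation. Let Ω ⊆ G be a sampling set of size m ≥ 1, and suppose C > 0 satisfies: for every y ∈ ℂⁿ and every coordinate index j, Σ_{ω∈Ω} |(π(ω)y)_j|² ≤ C·‖y‖₂². For x ∈ ℂⁿ let A_x ∈ ℂ^{m×n} be the matrix whose row indexed by ω ∈ Ω is (1/√m) times the conjugate transpose of π(ω)*x. Then for every x ∈ ℂⁿ (not necessarily sparse), ‖A_x‖_{2→2} ≤ √(C/m)·‖x‖₁, where ‖x‖₁ = Σ_j |x_j|. Consequently ‖A_x − A_y‖_{2→2} ≤ √(C/m)·‖x−y‖₁ for all x, y ∈ ℂⁿ.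 -/
/-!
The map `x ↦ A_x z` is conjugate linear, so `A_x z = ∑ₖ conj (x k) • A_{eₖ} z`. By hypothesis each
vector `A_{eₖ} z`, whose entries are the `k`-th coordinates of the `π(ω) z / √m`, has norm at most
`√(C / m) ‖z‖₂`, and the triangle inequality gives the factor `‖x‖₁`. The second bound is the
first one at `x - y`, since `A_x - A_y = A_{x - y}`.
-/

open scoped ComplexConjugate

/-- The ℓ¹-norm of a finitely supported complex vector. -/
noncomputable def l1norm {ι : Type*} [Fintype ι] (v : ι → ℂ) : ℝ :=
  ∑ i, ‖v i‖

open Matrix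

section Norms

variable {ι κ : Type*} [Fintype ι] [Fintype κ]

theorem l2norm_eq_norm_toLp (v : ι → ℂ) : l2norm v = ‖WithLp.toLp 2 v‖ :=
  (EuclideanSpace.norm_eq _).symm

theorem l2norm_nonneg (v : ι → ℂ) : 0 ≤ l2norm v :=
  Real.sqrt_nonneg _

theorem l2norm_smul (c : ℂ) (v : ι → ℂ) : l2norm (c • v) = ‖c‖ * l2norm v := by
  simp only [l2norm_eq_norm_toLp, WithLp.toLp_smul, norm_smul]

theorem l1norm_star (x : κ → ℂ) : l1norm (star x) = l1norm x := by
  simp only [l1norm, Pi.star_apply, norm_star]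

theorem l2norm_sum_le (v : κ → ι → ℂ) : l2norm (∑ k, v k) ≤ ∑ k, l2norm (v k) := by
  simpa only [l2norm_eq_norm_toLp, WithLp.toLp_sum] using
    norm_sum_le Finset.univ fun k => WithLp.toLp 2 (v k)

theorem l2norm_sum_smul_le (x : κ → ℂ) {v : κ → ι → ℂ} {B : ℝ} (hv : ∀ k, l2norm (v k) ≤ B) :
    l2norm (∑ k, x k • v k) ≤ l1norm x * B :=
  calc l2norm (∑ k, x k • v k)
      ≤ ∑ k, l2norm (x k • v k) := l2norm_sum_le _
    _ = ∑ k, ‖x k‖ * l2norm (v k) := by simp only [l2norm_smul]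
    _ ≤ ∑ k, ‖x k‖ * B := by gcongr with k; exact hv k
    _ = l1norm x * B := (Finset.sum_mul ..).symm

end Norms

section AdjointRowMatrix

variable {ι κ κ' : Type*} [Fintype κ]

/-- The matrix whose row `i` is the conjugate transpose of `(U i)ᴴ x`, for an arbitrary family `U`
of matrices. It carries no normalization: the factor `1 / √m` of `A_x` is absorbed into `U`. -/
def adjointRowMatrix (U : ι → Matrix κ κ' ℂ) (x : κ → ℂ) : Matrix ι κ' ℂ :=
  Matrix.of fun i => star ((U i)ᴴ *ᵥ x)

theorem adjointRowMatrix_sub (U : ι → Matrix κ κ' ℂ) (x y : κ → ℂ) :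
    adjointRowMatrix U (x - y) = adjointRowMatrix U x - adjointRowMatrix U y := by
  ext i j
  simp only [adjointRowMatrix, of_apply, mulVec_sub, star_sub, Pi.sub_apply, Matrix.sub_apply]

variable [Fintype κ']

theorem adjointRowMatrix_mulVec (U : ι → Matrix κ κ' ℂ) (x : κ → ℂ) (z : κ' → ℂ) :
    adjointRowMatrix U x *ᵥ z = ∑ k, star x k • fun i => (U i *ᵥ z) k := by
  ext i
  calc (adjointRowMatrix U x *ᵥ z) i
      = star ((U i)ᴴ *ᵥ x) ⬝ᵥ z := rfl
    _ = star x ⬝ᵥ U i *ᵥ z := by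
      rw [star_mulVec, conjTranspose_conjTranspose, dotProduct_mulVec]
    _ = (∑ k, star x k • fun i => (U i *ᵥ z) k) i := by
      simp only [dotProduct, Finset.sum_apply, Pi.smul_apply, smul_eq_mul]

variable [Fintype ι]

theorem l2norm_adjointRowMatrix_mulVec_le (U : ι → Matrix κ κ' ℂ) {K : ℝ}
    (hU : ∀ (y : κ' → ℂ) (k : κ), l2norm (fun i => (U i *ᵥ y) k) ≤ K * l2norm y)
    (x : κ → ℂ) (z : κ' → ℂ) :
    l2norm (adjointRowMatrix U x *ᵥ z) ≤ K * l1norm x * l2norm z :=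
  calc l2norm (adjointRowMatrix U x *ᵥ z)
      = l2norm (∑ k, star x k • fun i => (U i *ᵥ z) k) := by rw [adjointRowMatrix_mulVec]
    _ ≤ l1norm (star x) * (K * l2norm z) := l2norm_sum_smul_le _ (hU z)
    _ = K * l1norm x * l2norm z := by rw [l1norm_star]; ring

theorem stmt2_general (U : ι → Matrix κ κ' ℂ) {K : ℝ}
    (hU : ∀ (y : κ' → ℂ) (k : κ), l2norm (fun i => (U i *ᵥ y) k) ≤ K * l2norm y) :
    (∀ (x : κ → ℂ) (z : κ' → ℂ),
        l2norm (adjointRowMatrix U x *ᵥ z) ≤ K * l1norm x * l2norm z) ∧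
      (∀ (x y : κ → ℂ) (z : κ' → ℂ),
        l2norm ((adjointRowMatrix U x - adjointRowMatrix U y) *ᵥ z) ≤
          K * l1norm (x - y) * l2norm z) := by
  refine ⟨l2norm_adjointRowMatrix_mulVec_le U hU, fun x y z => ?_⟩
  rw [← adjointRowMatrix_sub]
  exact l2norm_adjointRowMatrix_mulVec_le U hU (x - y) z

end AdjointRowMatrix

theorem l2norm_inv_sqrt_smul_le {ι : Type*} [Fintype ι] {v : ι → ℂ} {C b : ℝ} (hb : 0 ≤ b)
    (hv : ∑ i, ‖v i‖ ^ 2 ≤ C * b ^ 2) (m : ℕ) :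
    l2norm ((1 / (√m : ℂ)) • v) ≤ √(C / m) * b :=
  calc l2norm ((1 / (√m : ℂ)) • v)
      = 1 / √m * l2norm v := by
        rw [l2norm_smul, norm_div, norm_one, Complex.norm_of_nonneg (Real.sqrt_nonneg _)]
    _ ≤ 1 / √m * √(C * b ^ 2) := by gcongr; exact Real.sqrt_le_sqrt hv
    _ = √(C / m) * b := by
        rw [Real.sqrt_mul' C (sq_nonneg b), Real.sqrt_sq hb, Real.sqrt_div' C m.cast_nonneg]
        ring

section UnitaryRepresentation

variable {G : Type*} [Group G] {n : ℕ} (π : G →* unitaryGroup (Fin n) ℂ) (Ω : Finset G)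

/-- The matrices `π(ω) / √|Ω|`, `ω ∈ Ω`, whose adjoints applied to `x` give the rows of `A_x`. -/
noncomputable def normalizedSamples (ω : Ω) : Matrix (Fin n) (Fin n) ℂ :=
  (1 / (√Ω.card : ℂ)) • (π ω : Matrix (Fin n) (Fin n) ℂ)

theorem Amat_eq_adjointRowMatrix [Fintype G] (x : Fin n → ℂ) :
    Amat π Ω x = adjointRowMatrix (normalizedSamples π Ω) x := by
  ext ω j
  simp [Amat, adjointRowMatrix, normalizedSamples, conjTranspose_smul, smul_mulVec]

theorem l2norm_normalizedSamples_mulVec_le {C : ℝ}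
    (hC : ∀ (y : Fin n → ℂ) (j : Fin n),
      ∑ ω ∈ Ω, ‖((π ω : Matrix (Fin n) (Fin n) ℂ) *ᵥ y) j‖ ^ 2 ≤ C * l2norm y ^ 2)
    (y : Fin n → ℂ) (j : Fin n) :
    l2norm (fun ω => (normalizedSamples π Ω ω *ᵥ y) j) ≤ √(C / Ω.card) * l2norm y := by
  simp only [normalizedSamples, smul_mulVec]
  refine l2norm_inv_sqrt_smul_le (l2norm_nonneg y) ?_ Ω.card
  rw [Finset.sum_coe_sort Ω fun ω => ‖((π ω : Matrix (Fin n) (Fin n) ℂ) *ᵥ y) j‖ ^ 2]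
  exact hC y j

end UnitaryRepresentation

theorem stmt2 {G : Type*} [Group G] [Fintype G] {n m : ℕ} (hn : 1 ≤ n)
    (π : G →* Matrix.unitaryGroup (Fin n) ℂ) (Ω : Finset G)
    (hm : Ω.card = m) (hm1 : 1 ≤ m)
    (C : ℝ) (hCpos : 0 < C)
    (hC : ∀ (y : Fin n → ℂ) (j : Fin n),
      ∑ ω ∈ Ω, ‖((π ω : Matrix (Fin n) (Fin n) ℂ).mulVec y) j‖ ^ 2 ≤ C * (l2norm y) ^ 2) :
    (∀ x z : Fin n → ℂ,
        l2norm ((Amat π Ω x).mulVec z) ≤ Real.sqrt (C / m) * l1norm x * l2norm z) ∧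
      (∀ x y z : Fin n → ℂ,
        l2norm ((Amat π Ω x - Amat π Ω y).mulVec z) ≤
          Real.sqrt (C / m) * l1norm (x - y) * l2norm z) := by
  subst hm
  simpa only [Amat_eq_adjointRowMatrix] using
    stmt2_general _ (l2norm_normalizedSamples_mulVec_le π Ω hC)
end

section
/- For positive integers s ≤ n, let D_{s,n} = {x ∈ ℂⁿ : ‖x‖₂ ≤ 1 and x has at most s nonzero entries}. Then D_{s,n} is contained in √s times the convex hull of the finite set {±√2·e₁,…,±√2·e_n, ±√2·i·e₁,…,±√2·i·e_n} ⊆ ℂⁿ, where e₁,…,e_n are the canonical basis vectors and i is the imaginary unit. That is, every x ∈ D_{s,n} can be written as √s times a convex combination of the 4n vectors ±√2·e_j and ±√2·i·e_j. -/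
open scoped Pointwise

/-- The set `{±√2·e_j, ±√2·i·e_j : 1 ≤ j ≤ n}` of `4n` vectors in `ℂⁿ`. -/
noncomputable def Bvec (n : ℕ) : Set (Fin n → ℂ) :=
  {v | ∃ j : Fin n,
    v = (Real.sqrt 2 : ℂ) • (Pi.single j (1 : ℂ) : Fin n → ℂ) ∨
    v = -((Real.sqrt 2 : ℂ) • (Pi.single j (1 : ℂ) : Fin n → ℂ)) ∨
    v = ((Real.sqrt 2 : ℂ) * Complex.I) • (Pi.single j (1 : ℂ) : Fin n → ℂ) ∨
    v = -(((Real.sqrt 2 : ℂ) * Complex.I) • (Pi.single j (1 : ℂ) : Fin n → ℂ))}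

/-!
The unit disc of `ℂ` lies in the square with vertices `±√2`, `±√2·i`. Applied in each coordinate,
this puts every `x ∈ ℂⁿ` into `‖x‖₁` times the convex hull of the `4n` vectors, and `‖x‖₁ ≤ √s ‖x‖₂`
for `s`-sparse `x` by Cauchy–Schwarz.
-/

theorem sum_mem_sum_smul_of_convex {𝕜 E ι : Type*} [Field 𝕜] [LinearOrder 𝕜]
    [IsStrictOrderedRing 𝕜] [AddCommGroup E] [Module 𝕜 E] {K : Set E} (hK : Convex 𝕜 K)
    (hne : K.Nonempty) {t : Finset ι} {c : ι → 𝕜} {x : ι → E} (hc : ∀ i ∈ t, 0 ≤ c i)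
    (hx : ∀ i ∈ t, x i ∈ c i • K) : ∑ i ∈ t, x i ∈ (∑ i ∈ t, c i) • K := by
  classical
  induction t using Finset.induction_on with
  | empty => simp [Set.zero_smul_set hne]
  | insert i t hi ih =>
    rw [Finset.forall_mem_insert] at hc hx
    rw [Finset.sum_insert hi, Finset.sum_insert hi,
      hK.add_smul hc.1 (Finset.sum_nonneg hc.2)]
    exact Set.add_mem_add hx.1 (ih hc.2 hx.2)

theorem smul_mem_abs_smul_of_balanced {E : Type*} [AddCommGroup E] [Module ℝ E] {K : Set E}
    (hK : Balanced ℝ K) {v : E} (hv : v ∈ K) (a : ℝ) : a • v ∈ |a| • K := by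
  rw [← hK.smul_congr (abs_abs a).symm]
  exact Set.smul_mem_smul_set hv

theorem absConvex_convexHull_of_neg_eq {E : Type*} [AddCommGroup E] [Module ℝ E] {S : Set E}
    (hS : -S = S) : AbsConvex ℝ (convexHull ℝ S) := by
  have hhull : convexHull ℝ S = absConvexHull ℝ S := by
    rw [← convexHull_union_neg_eq_absConvexHull, hS, Set.union_self]
  exact hhull ▸ absConvex_absConvexHull

theorem abs_re_add_abs_im_le_sqrt_two_mul_norm (z : ℂ) : |z.re| + |z.im| ≤ √2 * ‖z‖ := by
  rw [Complex.norm_eq_sqrt_sq_add_sq, ← Real.sqrt_mul zero_le_two, ← sq_abs z.re, ← sq_abs z.im]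
  exact Real.le_sqrt_of_sq_le add_sq_le

theorem smul_mem_norm_smul_of_absConvex {E : Type*} [AddCommGroup E] [Module ℝ E] [Module ℂ E]
    [IsScalarTower ℝ ℂ E] {K : Set E} (hK : AbsConvex ℝ K) {v : E} (hv : (√2 : ℂ) • v ∈ K)
    (hIv : ((√2 : ℂ) * Complex.I) • v ∈ K) (z : ℂ) : z • v ∈ ‖z‖ • K := by
  have hdecomp : z • v =
      (z.re / √2) • (√2 : ℂ) • v + (z.im / √2) • ((√2 : ℂ) * Complex.I) • v := by
    have h2 : (√2 : ℂ) ≠ 0 := by simp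
    rw [← smul_assoc, ← smul_assoc, ← add_smul, Complex.real_smul, Complex.real_smul]
    push_cast
    rw [← mul_assoc, div_mul_cancel₀ _ h2, div_mul_cancel₀ _ h2, Complex.re_add_im]
  have hmem : z • v ∈ (|z.re / √2| + |z.im / √2|) • K := by
    rw [hdecomp, hK.2.add_smul (abs_nonneg _) (abs_nonneg _)]
    exact Set.add_mem_add (smul_mem_abs_smul_of_balanced hK.1 hv _)
      (smul_mem_abs_smul_of_balanced hK.1 hIv _)
  have hle : |z.re / √2| + |z.im / √2| ≤ ‖z‖ := by
    rw [abs_div, abs_div, ← add_div, abs_of_nonneg (Real.sqrt_nonneg 2),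
      div_le_iff₀' (Real.sqrt_pos.2 two_pos)]
    exact abs_re_add_abs_im_le_sqrt_two_mul_norm z
  refine hK.1.smul_mono ?_ hmem
  rwa [Real.norm_of_nonneg (by positivity), norm_norm]

theorem neg_Bvec (n : ℕ) : -Bvec n = Bvec n := by
  ext v
  simp only [Bvec, Set.mem_neg, Set.mem_ofPred_eq, neg_eq_iff_eq_neg, neg_neg]
  exact exists_congr fun j ↦ by tauto

theorem absConvex_convexHull_Bvec (n : ℕ) : AbsConvex ℝ (convexHull ℝ (Bvec n)) :=
  absConvex_convexHull_of_neg_eq (neg_Bvec n)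

theorem mem_sum_norm_smul_convexHull_Bvec {n : ℕ} [NeZero n] (x : Fin n → ℂ) :
    x ∈ (∑ j, ‖x j‖) • convexHull ℝ (Bvec n) := by
  have hsub := subset_convexHull ℝ (Bvec n)
  have hne : (convexHull ℝ (Bvec n)).Nonempty := ⟨_, hsub ⟨0, .inl rfl⟩⟩
  have hcoord (j : Fin n) :
      x j • (Pi.single j 1 : Fin n → ℂ) ∈ ‖x j‖ • convexHull ℝ (Bvec n) :=
    smul_mem_norm_smul_of_absConvex (absConvex_convexHull_Bvec n)
      (hsub ⟨j, .inl rfl⟩) (hsub ⟨j, .inr (.inr (.inl rfl))⟩) (x j)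
  have hsum := sum_mem_sum_smul_of_convex (convex_convexHull ℝ _) hne (t := Finset.univ)
    (fun j _ ↦ norm_nonneg (x j)) (fun j _ ↦ hcoord j)
  rwa [← pi_eq_sum_univ' x] at hsum

theorem sum_norm_le_sqrt_sparsity_mul_l2norm {n : ℕ} (x : Fin n → ℂ) :
    ∑ j, ‖x j‖ ≤ √(sparsity x) * l2norm x := by
  set S := (Set.toFinite (Function.support x)).toFinset
  calc ∑ j, ‖x j‖
      = ∑ j ∈ S, 1 * ‖x j‖ := by
        simp only [one_mul]
        exact (Finset.sum_subset S.subset_univ fun j _ hj ↦ by simpa [S] using hj).symm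
    _ ≤ √(∑ _j ∈ S, 1 ^ 2) * √(∑ j ∈ S, ‖x j‖ ^ 2) := Real.sum_mul_le_sqrt_mul_sqrt S _ _
    _ = √(sparsity x) * √(∑ j ∈ S, ‖x j‖ ^ 2) := by simp [sparsity, S]
    _ ≤ √(sparsity x) * l2norm x := by
        unfold l2norm
        gcongr
        exact S.subset_univ

theorem stmt4 {n s : ℕ} (hn : 1 ≤ n) (hs : 1 ≤ s) (hsn : s ≤ n)
    (x : Fin n → ℂ) (hx2 : l2norm x ≤ 1) (hx0 : sparsity x ≤ s) :
    x ∈ (Real.sqrt s : ℝ) • convexHull ℝ (Bvec n) := by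
  have : NeZero n := ⟨Nat.one_le_iff_ne_zero.1 hn⟩
  have hl1 : ∑ j, ‖x j‖ ≤ √s := calc
    ∑ j, ‖x j‖ ≤ √(sparsity x) * l2norm x := sum_norm_le_sqrt_sparsity_mul_l2norm x
    _ ≤ √(sparsity x) * 1 := by gcongr
    _ ≤ √s := by rw [mul_one]; gcongr
  refine (absConvex_convexHull_Bvec n).1.smul_mono ?_ (mem_sum_norm_smul_convexHull_Bvec x)
  rwa [Real.norm_of_nonneg (by positivity), Real.norm_of_nonneg (by positivity)]
end

section
/- There exists a universal constant c₁ > 0 with the following property. Let G be a finite group, n ≥ 2 an integer, π : G → GL(ℂⁿ) a unitary representation, and Ω ⊆ G a sampling set of size m ≥ 1, and suppose C > 0 satisfies: for every y ∈ ℂⁿ and every coordinate j, Σ_{ω∈Ω} |(π(ω)y)_j|² ≤ C·‖y‖₂². Let s ≤ n, D_{s,n} = {x ∈ ℂⁿ : ‖x‖₂ ≤ 1, ‖x‖₀ ≤ s}, and 𝒜 = {A_x : x ∈ D_{s,n}} where A_x ∈ ℂ^{m×n} has row (1/√m)·(π(ω)*x)* for ω ∈ Ω. Then for every t > 0 there exists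 a finite set 𝒩 ⊆ ℂ^{m×n} such that every A ∈ 𝒜 is within distance t of 𝒩 in operator norm ‖·‖_{2→2}, and log |𝒩| ≤ c₁·(s·C/m)·t⁻²·log(n)·log(4n). -/
open scoped ComplexConjugate

/-- The ℓ²→ℓ² operator norm of a complex matrix. -/
noncomputable def opNorm22 {ι κ : Type*} [Fintype ι] [Fintype κ] (A : Matrix ι κ ℂ) : ℝ :=
  sSup {r : ℝ | ∃ z : κ → ℂ, l2norm z ≤ 1 ∧ r = l2norm (A.mulVec z)}

/-!
A vector with `‖x‖₂ ≤ 1` and `‖x‖₀ ≤ s` has `‖x‖₁ ≤ √s`, so `A_x` lies in the convex hull of `4n`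
matrices, the images of `2√s · iᵃ · eₖ`, each of norm at most `2√(sC/m)`. By Maurey's empirical
method, a convex combination of these is approximated by the average of `L` independent samples of
the vertices, and there are at most `(4n)ᴸ` such averages. The deviation is controlled by a trace
moment `𝔼 tr S^(2k)` of the centered sum `S`, taken at `k ≈ log n` after a Hermitian dilation.
Resampling one summand yields an exchangeable pair `(S, S')`, and
`tr ((S - S') (S^(2k+1) - S'^(2k+1))) ≤ (2k+1) tr ((S - S')² (S^(2k) + S'^(2k)))`
bounds each moment by the previous one.
-/

section Net

open Matrix
open RCLike (re ofReal_re)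
open Function (update)
open scoped Matrix.Norms.L2Operator

section Trace

variable {𝕜 m n : Type*} [RCLike 𝕜] [Fintype m] [Fintype n] [DecidableEq m] [DecidableEq n]

lemma re_trace_conjTranspose_mul_diagonal_mul_diagonal (M : Matrix m n 𝕜) (a : m → ℝ)
    (b : n → ℝ) :
    re (trace (Mᴴ * diagonal (fun i => (a i : 𝕜)) * M * diagonal (fun j => (b j : 𝕜)))) =
      ∑ j, ∑ i, a i * b j * ‖M i j‖ ^ 2 := by
  simp only [trace, diag_apply, mul_diagonal, Matrix.mul_apply (N := M),
    conjTranspose_apply, Finset.sum_mul, map_sum]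
  refine Finset.sum_congr rfl fun j _ => Finset.sum_congr rfl fun i _ => ?_
  have entry : star (M i j) * (a i : 𝕜) * M i j * (b j : 𝕜) =
      ((a i * b j * ‖M i j‖ ^ 2 : ℝ) : 𝕜) := by
    push_cast
    rw [← RCLike.conj_mul, RCLike.star_def]
    ring
  rw [entry, ofReal_re]

omit [DecidableEq m] [DecidableEq n] in
lemma re_trace_conjTranspose_mul_self (A : Matrix m n 𝕜) :
    re (trace (Aᴴ * A)) = ∑ j, ∑ i, ‖A i j‖ ^ 2 := by
  classical
  simpa using re_trace_conjTranspose_mul_diagonal_mul_diagonal A 1 1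

lemma pow_eq_eigenvectorUnitary_mul_diagonal_mul {X : Matrix m m 𝕜} (hX : X.IsHermitian) (q : ℕ) :
    X ^ q = (hX.eigenvectorUnitary : Matrix m m 𝕜) *
      diagonal (fun i => ((hX.eigenvalues i ^ q : ℝ) : 𝕜)) *
        (hX.eigenvectorUnitary : Matrix m m 𝕜)ᴴ := by
  conv_lhs => rw [hX.spectral_theorem, ← map_pow, diagonal_pow, Unitary.conjStarAlgAut_apply]
  congr 3
  ext i
  simp

lemma re_trace_pow_eq_sum_eigenvalues {X : Matrix m m 𝕜} (hX : X.IsHermitian) (q : ℕ) :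
    re (trace (X ^ q)) = ∑ i, hX.eigenvalues i ^ q := by
  rw [pow_eq_eigenvectorUnitary_mul_diagonal_mul hX, trace_mul_cycle, ← star_eq_conjTranspose,
    Unitary.coe_star_mul_self, one_mul, trace_diagonal, map_sum]
  simp only [ofReal_re]

lemma norm_pow_le_re_trace_pow {X : Matrix m m 𝕜} (hX : X.IsHermitian) {q : ℕ} (hq : Even q)
    (hq0 : q ≠ 0) : ‖X‖ ^ q ≤ re (trace (X ^ q)) := by
  have norm_eq : ‖X‖ = ‖hX.eigenvalues‖ := by
    conv_lhs => rw [hX.spectral_theorem, Unitary.conjStarAlgAut_apply, ← Unitary.coe_star,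
      CStarRing.norm_mul_coe_unitary, CStarRing.norm_coe_unitary_mul, l2_opNorm_diagonal]
    simp [Pi.norm_def, Function.comp_def]
  rw [norm_eq, re_trace_pow_eq_sum_eigenvalues hX]
  rcases isEmpty_or_nonempty m with _ | _
  · simp [Pi.norm_def, hq0]
  obtain ⟨i, hi⟩ := Finite.exists_max fun i => ‖hX.eigenvalues i‖
  calc ‖hX.eigenvalues‖ ^ q ≤ ‖hX.eigenvalues i‖ ^ q := by
        gcongr
        exact (pi_norm_le_iff_of_nonempty _).2 hi
    _ = hX.eigenvalues i ^ q := by rw [Real.norm_eq_abs, hq.pow_abs]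
    _ ≤ ∑ i, hX.eigenvalues i ^ q :=
        Finset.single_le_sum (f := fun i => hX.eigenvalues i ^ q) (fun i _ => hq.pow_nonneg _)
          (Finset.mem_univ i)

/-- Expanding in eigenbases of `X` and `Y` reduces trace inequalities to scalar ones. -/
lemma re_trace_conjTranspose_mul_pow_mul_pow {X : Matrix m m 𝕜} {Y : Matrix n n 𝕜}
    (hX : X.IsHermitian) (hY : Y.IsHermitian) (M : Matrix m n 𝕜) (q r : ℕ) :
    re (trace (Mᴴ * X ^ q * M * Y ^ r)) =
      ∑ k, ∑ j, hX.eigenvalues j ^ q * hY.eigenvalues k ^ r *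
        ‖((hX.eigenvectorUnitary : Matrix m m 𝕜)ᴴ * M *
          (hY.eigenvectorUnitary : Matrix n n 𝕜)) j k‖ ^ 2 := by
  rw [← re_trace_conjTranspose_mul_diagonal_mul_diagonal,
    pow_eq_eigenvectorUnitary_mul_diagonal_mul hX, pow_eq_eigenvectorUnitary_mul_diagonal_mul hY,
    ← Matrix.mul_assoc _ _ (hY.eigenvectorUnitary : Matrix n n 𝕜)ᴴ, trace_mul_comm]
  simp only [conjTranspose_mul, conjTranspose_conjTranspose, Matrix.mul_assoc]

lemma pow_mul_pow_le_pow_add_pow (a b : ℝ) {q r : ℕ} (h : Even (q + r)) :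
    a ^ q * b ^ r ≤ a ^ (q + r) + b ^ (q + r) := by
  wlog hab : |a| ≤ |b| generalizing a b q r
  · rw [mul_comm, add_comm (a ^ _), add_comm q]
    exact this b a (add_comm q r ▸ h) (le_of_not_ge hab)
  calc a ^ q * b ^ r ≤ |a| ^ q * |b| ^ r := by
        rw [← abs_pow, ← abs_pow, ← abs_mul]; exact le_abs_self _
    _ ≤ |b| ^ q * |b| ^ r := by gcongr
    _ = b ^ (q + r) := by rw [← pow_add, h.pow_abs]
    _ ≤ a ^ (q + r) + b ^ (q + r) := le_add_of_nonneg_left (h.pow_nonneg a)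

lemma re_trace_conjTranspose_mul_pow_mul_pow_le {X : Matrix m m 𝕜} {Y : Matrix n n 𝕜}
    (hX : X.IsHermitian) (hY : Y.IsHermitian) (M : Matrix m n 𝕜) {q r : ℕ} (h : Even (q + r)) :
    re (trace (Mᴴ * X ^ q * M * Y ^ r)) ≤
      re (trace (Mᴴ * X ^ (q + r) * M)) + re (trace (M * Y ^ (q + r) * Mᴴ)) := by
  have hXpow := re_trace_conjTranspose_mul_pow_mul_pow hX hY M (q + r) 0
  have hYpow := re_trace_conjTranspose_mul_pow_mul_pow hX hY M 0 (q + r)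
  rw [pow_zero, Matrix.mul_one] at hXpow
  rw [pow_zero, Matrix.mul_one, Matrix.mul_assoc, trace_mul_comm] at hYpow
  rw [hXpow, hYpow, re_trace_conjTranspose_mul_pow_mul_pow hX hY, ← Finset.sum_add_distrib]
  refine Finset.sum_le_sum fun k _ => ?_
  rw [← Finset.sum_add_distrib]
  refine Finset.sum_le_sum fun j _ => ?_
  simp only [pow_zero, mul_one, one_mul, ← add_mul]
  gcongr
  exact pow_mul_pow_le_pow_add_pow _ _ h

lemma pow_sub_pow_eq_sum {R : Type*} [Ring R] (x y : R) (N : ℕ) :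
    x ^ N - y ^ N = ∑ q ∈ Finset.range N, x ^ q * (x - y) * y ^ (N - 1 - q) := by
  have telescope := Finset.sum_range_sub (fun q => x ^ q * y ^ (N - q)) N
  simp only [Nat.sub_self, pow_zero, mul_one, Nat.sub_zero, one_mul] at telescope
  rw [← telescope]
  refine Finset.sum_congr rfl fun q hq => ?_
  have hq := Finset.mem_range.1 hq
  rw [show N - q = N - 1 - q + 1 by omega, show N - (q + 1) = N - 1 - q by omega, pow_succ x,
    pow_succ' y]
  noncomm_ring

lemma re_trace_sub_mul_pow_sub_pow_le {X Y : Matrix m m 𝕜} (hX : X.IsHermitian)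
    (hY : Y.IsHermitian) (k : ℕ) :
    re (trace ((X - Y) * (X ^ (2 * k + 1) - Y ^ (2 * k + 1)))) ≤
      (2 * k + 1) * (re (trace ((X - Y) * X ^ (2 * k) * (X - Y))) +
        re (trace ((X - Y) * Y ^ (2 * k) * (X - Y)))) := by
  have card_nsmul (c : ℝ) : (Finset.range (2 * k + 1)).card • c = (2 * k + 1) * c := by
    rw [Finset.card_range, nsmul_eq_mul, Nat.cast_add_one, Nat.cast_mul, Nat.cast_ofNat]
  rw [pow_sub_pow_eq_sum, Finset.mul_sum, trace_sum, map_sum, ← card_nsmul]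
  refine Finset.sum_le_card_nsmul _ _ _ fun q hq => ?_
  have hq := Finset.mem_range.1 hq
  have hqr : q + (2 * k + 1 - 1 - q) = 2 * k := by omega
  have compare := re_trace_conjTranspose_mul_pow_mul_pow_le hX hY (X - Y)
    (hqr ▸ even_two_mul k)
  rwa [hqr, (hX.sub hY).eq, mul_assoc, mul_assoc, ← mul_assoc (X ^ q)] at compare

end Trace

section L2Operator

variable {𝕜 l m n : Type*} [RCLike 𝕜] [Fintype l] [Fintype m] [Fintype n] [DecidableEq m]
  [DecidableEq n]

omit [DecidableEq m] in
lemma sum_norm_sq_mulVec_le (A : Matrix m n 𝕜) (v : n → 𝕜) :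
    ∑ i, ‖(A *ᵥ v) i‖ ^ 2 ≤ ‖A‖ ^ 2 * ∑ j, ‖v j‖ ^ 2 := by
  have := pow_le_pow_left₀ (norm_nonneg _) (l2_opNorm_mulVec A (WithLp.toLp 2 v)) 2
  rwa [mul_pow, EuclideanSpace.norm_sq_eq, EuclideanSpace.norm_sq_eq] at this

omit [DecidableEq m] in
lemma l2_opNorm_le_of_sum_norm_sq_mulVec_le {A : Matrix m n 𝕜} {r : ℝ} (hr : 0 ≤ r)
    (h : ∀ v : n → 𝕜, ∑ i, ‖(A *ᵥ v) i‖ ^ 2 ≤ r ^ 2 * ∑ j, ‖v j‖ ^ 2) : ‖A‖ ≤ r := by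
  rw [l2_opNorm_def]
  refine ContinuousLinearMap.opNorm_le_bound _ hr fun v => ?_
  refine le_of_sq_le_sq ?_ (by positivity)
  rw [mul_pow, EuclideanSpace.norm_sq_eq, EuclideanSpace.norm_sq_eq]
  exact h v.ofLp

omit [DecidableEq n] in
lemma re_trace_conjTranspose_mul_self_mul_le (D : Matrix l m 𝕜) (A : Matrix m n 𝕜) :
    re (trace ((D * A)ᴴ * (D * A))) ≤ ‖D‖ ^ 2 * re (trace (Aᴴ * A)) := by
  rw [re_trace_conjTranspose_mul_self, re_trace_conjTranspose_mul_self, Finset.mul_sum]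
  exact Finset.sum_le_sum fun j _ => sum_norm_sq_mulVec_le D fun i => A i j

omit [DecidableEq m] in
lemma re_trace_conjTranspose_mul_self_le (A : Matrix m n 𝕜) :
    re (trace (Aᴴ * A)) ≤ ‖A‖ ^ 2 * Fintype.card n := by
  have bound := re_trace_conjTranspose_mul_self_mul_le A (1 : Matrix n n 𝕜)
  rwa [Matrix.mul_one, conjTranspose_one, Matrix.mul_one, trace_one, RCLike.natCast_re] at bound

lemma re_trace_mul_pow_two_mul_mul_le {D X : Matrix m m 𝕜} (hD : D.IsHermitian)
    (hX : X.IsHermitian) (k : ℕ) :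
    re (trace (D * X ^ (2 * k) * D)) ≤ ‖D‖ ^ 2 * re (trace (X ^ (2 * k))) := by
  have bound := re_trace_conjTranspose_mul_self_mul_le D (X ^ k)
  rw [conjTranspose_mul, hD.eq, (hX.pow k).eq, trace_mul_comm, ← pow_add, ← two_mul] at bound
  rwa [two_mul, pow_add, ← mul_assoc, mul_assoc, ← pow_add, ← two_mul]

end L2Operator

section Sampling

variable {ι κ : Type*} [Fintype ι] [Fintype κ] [DecidableEq κ] {w : ι → ℝ}

/-- The expectation functional of a `κ`-indexed family of independent samples drawn from the
weights `w` on `ι`. -/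
noncomputable def iidMean (κ : Type*) [Fintype κ] [DecidableEq κ] (w : ι → ℝ) :
    ((κ → ι) → ℝ) →ₗ[ℝ] ℝ :=
  ∑ f : κ → ι, (∏ k, w (f k)) • LinearMap.proj f

lemma iidMean_apply (w : ι → ℝ) (F : (κ → ι) → ℝ) :
    iidMean κ w F = ∑ f : κ → ι, (∏ k, w (f k)) * F f := by
  simp [iidMean]

lemma iidMean_const (hw : ∑ i, w i = 1) (c : ℝ) : iidMean κ w (fun _ => c) = c := by
  rw [iidMean_apply, ← Finset.sum_mul, ← Fintype.prod_sum fun (_ : κ) i => w i]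
  simp [hw]

lemma iidMean_mono (hw : 0 ≤ w) : Monotone (iidMean κ w) := fun F F' h => by
  simp only [iidMean_apply]
  exact Finset.sum_le_sum fun f _ =>
    mul_le_mul_of_nonneg_left (h f) (Finset.prod_nonneg fun k _ => hw (f k))

lemma exists_le_of_iidMean_le (hw : w ∈ stdSimplex ℝ ι) {F : (κ → ι) → ℝ} {b : ℝ}
    (h : iidMean κ w F ≤ b) : ∃ f, F f ≤ b := by
  by_contra! hF
  obtain ⟨f₀, hf₀⟩ : ∃ f₀, ∀ f, F f₀ ≤ F f := by
    have : Nonempty (κ → ι) := by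
      by_contra! _
      simpa [iidMean_apply] using iidMean_const (κ := κ) hw.2 1
    exact Finite.exists_min F
  have : F f₀ ≤ iidMean κ w F := by
    simpa only [iidMean_const hw.2] using iidMean_mono (κ := κ) hw.1 hf₀
  linarith [hF f₀]

lemma iidMean_resample (w : ι → ℝ) (l : κ) (F : (κ → ι) → ι → ℝ) :
    iidMean κ w (fun f => ∑ i, w i * F f i) =
      iidMean κ w (fun f => ∑ i, w i * F (update f l i) (f l)) := by
  let e : (κ → ι) × ι → (κ → ι) × ι := fun p => (update p.1 l p.2, p.1 l)
  have he : Function.Involutive e := fun p => by simp [e]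
  simp only [iidMean_apply, Finset.mul_sum, ← mul_assoc]
  rw [← Fintype.sum_prod_type', ← Fintype.sum_prod_type']
  refine (Fintype.sum_equiv he.toPerm _ _ fun p => ?_).symm
  have weight : (∏ k, w (update p.1 l p.2 k)) * w (p.1 l) = (∏ k, w (p.1 k)) * w p.2 := by
    simp only [← Function.comp_apply (f := w), Function.comp_update]
    rw [Finset.prod_update_of_mem (Finset.mem_univ l),
      ← Finset.mul_prod_erase _ (w ∘ p.1) (Finset.mem_univ l), Finset.sdiff_singleton_eq_erase]
    simp only [Function.comp_apply]
    ring
  simp only [Function.Involutive.coe_toPerm, e, weight]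

lemma iidMean_le_of_add_resample_le (hw : w ∈ stdSimplex ℝ ι) (l : κ) {g : (κ → ι) → ι → ℝ}
    {T : (κ → ι) → ℝ}
    (h : ∀ f i, g f i + g (update f l i) (f l) ≤ T f + T (update f l i)) :
    iidMean κ w (fun f => ∑ i, w i * g f i) ≤ iidMean κ w T := by
  have resample_T : iidMean κ w (fun f => ∑ i, w i * T (update f l i)) = iidMean κ w T := by
    rw [← iidMean_resample w l fun f _ => T f]
    simp only [← Finset.sum_mul, hw.2, one_mul]
  have bound := iidMean_mono (κ := κ) hw.1 fun f => Finset.sum_le_sum fun i (_ : i ∈ Finset.univ) =>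
    mul_le_mul_of_nonneg_left (h f i) (hw.1 i)
  simp only [mul_add, Finset.sum_add_distrib, ← Finset.sum_mul, hw.2, one_mul] at bound
  have split (F F' : (κ → ι) → ℝ) :
      iidMean κ w (fun f => F f + F' f) = iidMean κ w F + iidMean κ w F' := map_add _ F F'
  rw [split, split, ← iidMean_resample w l g, resample_T] at bound
  linarith

end Sampling

section MomentBound

variable {𝕜 ι κ d E F : Type*} [RCLike 𝕜] [Fintype ι] [Fintype κ] [AddCommGroup E] [Module ℝ E]
  [AddCommGroup F] [Module ℝ F]

/-- The sum of the deviations of the samples `v (f l)` from the mean of `v` under the weights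
`w`. -/
def centeredSum (w : ι → ℝ) (v : ι → E) (f : κ → ι) : E :=
  ∑ l, (v (f l) - ∑ i, w i • v i)

lemma map_centeredSum (φ : E →ₗ[ℝ] F) (w : ι → ℝ) (v : ι → E) (f : κ → ι) :
    φ (centeredSum w v f) = centeredSum w (φ ∘ v) f := by
  simp [centeredSum]

lemma centeredSum_sub_centeredSum_update [DecidableEq κ] (w : ι → ℝ) (v : ι → E) (f : κ → ι)
    (l : κ) (i : ι) :
    centeredSum w v f - centeredSum w v (update f l i) = v (f l) - v i := by
  rw [centeredSum, centeredSum, ← Finset.sum_sub_distrib, Finset.sum_eq_single l]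
  · simp
  · intro k _ hk
    simp [hk]
  · simp

lemma isHermitian_centeredSum (w : ι → ℝ) {H : ι → Matrix d d 𝕜} (hH : ∀ i, (H i).IsHermitian)
    (f : κ → ι) : (centeredSum w H f).IsHermitian := by
  simp only [centeredSum, IsHermitian, conjTranspose_sum, conjTranspose_sub, conjTranspose_smul,
    (hH _).eq, star_trivial]

variable [DecidableEq κ] [Fintype d] [DecidableEq d] {w : ι → ℝ} {H : ι → Matrix d d 𝕜}

lemma iidMean_re_trace_deviation_mul_centeredSum_pow_le (hw : w ∈ stdSimplex ℝ ι)
    (hH : ∀ i, (H i).IsHermitian) (k : ℕ) {T : (κ → ι) → ℝ}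
    (hT : ∀ f i j,
      re (trace ((H i - H j) * centeredSum w H f ^ (2 * k) * (H i - H j))) ≤ T f) (l : κ) :
    iidMean κ w (fun f =>
        re (trace ((H (f l) - ∑ i, w i • H i) * centeredSum w H f ^ (2 * k + 1)))) ≤
      (2 * k + 1) * iidMean κ w T := by
  have deviation (f : κ → ι) :
      re (trace ((H (f l) - ∑ i, w i • H i) * centeredSum w H f ^ (2 * k + 1))) =
        ∑ i, w i * re (trace ((H (f l) - H i) * centeredSum w H f ^ (2 * k + 1))) := by
    have average : H (f l) - ∑ i, w i • H i = ∑ i, w i • (H (f l) - H i) := by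
      simp only [smul_sub, Finset.sum_sub_distrib, ← Finset.sum_smul, hw.2, one_smul]
    simp only [average, Finset.sum_mul, trace_sum, map_sum, smul_mul_assoc, trace_smul,
      RCLike.smul_re]
  simp only [deviation]
  rw [← smul_eq_mul (2 * k + 1 : ℝ), ← map_smul]
  refine iidMean_le_of_add_resample_le hw l fun f i => ?_
  have pair := re_trace_sub_mul_pow_sub_pow_le (isHermitian_centeredSum w hH f)
    (isHermitian_centeredSum w hH (update f l i)) k
  rw [centeredSum_sub_centeredSum_update] at pair
  calc _ = re (trace ((H (f l) - H i) * (centeredSum w H f ^ (2 * k + 1) -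
          centeredSum w H (update f l i) ^ (2 * k + 1)))) := by
        rw [Function.update_self, ← map_add, ← trace_add]
        congr 2
        noncomm_ring
    _ ≤ _ := pair
    _ ≤ (2 * k + 1) * (T f + T (update f l i)) := by
        gcongr <;> exact hT _ _ _
    _ = _ := by simp only [Pi.smul_apply, smul_eq_mul, mul_add]

lemma iidMean_re_trace_centeredSum_pow_succ_le (hw : w ∈ stdSimplex ℝ ι)
    (hH : ∀ i, (H i).IsHermitian) (k : ℕ) {T : (κ → ι) → ℝ}
    (hT : ∀ f i j,
      re (trace ((H i - H j) * centeredSum w H f ^ (2 * k) * (H i - H j))) ≤ T f) :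
    iidMean κ w (fun f => re (trace (centeredSum w H f ^ (2 * (k + 1))))) ≤
      Fintype.card κ * ((2 * k + 1) * iidMean κ w T) := by
  have expand : (fun f : κ → ι => re (trace (centeredSum w H f ^ (2 * (k + 1))))) =
      ∑ l, fun f => re (trace ((H (f l) - ∑ i, w i • H i) * centeredSum w H f ^ (2 * k + 1))) := by
    ext f
    rw [Finset.sum_apply, ← map_sum, ← trace_sum, ← Finset.sum_mul, ← centeredSum, ← pow_succ']
    rfl
  rw [expand, map_sum]
  refine (Finset.sum_le_card_nsmul _ _ _ fun l _ =>
    iidMean_re_trace_deviation_mul_centeredSum_pow_le hw hH k hT l).trans_eq ?_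
  rw [nsmul_eq_mul, Finset.card_univ]

theorem iidMean_re_trace_centeredSum_pow_le (hw : w ∈ stdSimplex ℝ ι)
    (hH : ∀ i, (H i).IsHermitian) {ρ τ : ℝ} (hρ : ∀ i j, ‖H i - H j‖ ≤ ρ)
    (hτ : ∀ i j, re (trace ((H i - H j) * (H i - H j))) ≤ τ * ρ ^ 2) (hτ0 : 0 ≤ τ) (k : ℕ) :
    iidMean κ w (fun f => re (trace (centeredSum w H f ^ (2 * (k + 1))))) ≤
      τ * ((2 * k + 1) * Fintype.card κ * ρ ^ 2) ^ (k + 1) := by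
  induction k with
  | zero =>
    refine (iidMean_re_trace_centeredSum_pow_succ_le hw hH 0 (T := fun _ => τ * ρ ^ 2)
      fun f i j => by simpa using hτ i j).trans_eq ?_
    rw [iidMean_const hw.2]
    push_cast
    ring
  | succ k ih =>
    refine (iidMean_re_trace_centeredSum_pow_succ_le hw hH (k + 1)
      (T := ρ ^ 2 • fun f => re (trace (centeredSum w H f ^ (2 * (k + 1)))))
        fun f i j => ?_).trans ?_
    · refine (re_trace_mul_pow_two_mul_mul_le ((hH i).sub (hH j)) (isHermitian_centeredSum w hH f)
        (k + 1)).trans ?_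
      have trace_nonneg : 0 ≤ re (trace (centeredSum w H f ^ (2 * (k + 1)))) :=
        (pow_nonneg (norm_nonneg _) _).trans (norm_pow_le_re_trace_pow
          (isHermitian_centeredSum w hH f) (even_two_mul _) (by omega))
      simp only [Pi.smul_apply, smul_eq_mul]
      gcongr
      exact hρ i j
    · rw [map_smul, smul_eq_mul]
      push_cast
      calc _ ≤ Fintype.card κ * ((2 * (k + 1 : ℝ) + 1) * (ρ ^ 2 *
            (τ * ((2 * (k + 1 : ℝ) + 1) * Fintype.card κ * ρ ^ 2) ^ (k + 1)))) := by
            gcongr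
            refine ih.trans ?_
            gcongr
            linarith
        _ = _ := by ring

end MomentBound

section Dilation

variable {𝕜 m n : Type*} [RCLike 𝕜]

/-- The Hermitian dilation `B ↦ [0 B; Bᴴ 0]`, as a real-linear map. It carries norm bounds on
Hermitian matrices over to rectangular ones. -/
def hermitianDilation : Matrix m n 𝕜 →ₗ[ℝ] Matrix (m ⊕ n) (m ⊕ n) 𝕜 where
  toFun B := fromBlocks 0 B Bᴴ 0
  map_add' A B := by simp [fromBlocks_add, conjTranspose_add]
  map_smul' c A := by simp [fromBlocks_smul, conjTranspose_smul]

lemma hermitianDilation_apply (B : Matrix m n 𝕜) :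
    hermitianDilation B = fromBlocks 0 B Bᴴ 0 := rfl

lemma isHermitian_hermitianDilation (B : Matrix m n 𝕜) : (hermitianDilation B).IsHermitian := by
  simp [hermitianDilation_apply, IsHermitian, fromBlocks_conjTranspose]

variable [Fintype m] [Fintype n] [DecidableEq m] [DecidableEq n]

lemma norm_hermitianDilation (B : Matrix m n 𝕜) : ‖hermitianDilation B‖ = ‖B‖ := by
  refine le_antisymm ?_ ?_
  · refine l2_opNorm_le_of_sum_norm_sq_mulVec_le (norm_nonneg _) fun v => ?_
    have upper := sum_norm_sq_mulVec_le B (v ∘ Sum.inr)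
    have lower := sum_norm_sq_mulVec_le Bᴴ (v ∘ Sum.inl)
    rw [l2_opNorm_conjTranspose] at lower
    rw [hermitianDilation_apply, fromBlocks_mulVec, Fintype.sum_sum_type, Fintype.sum_sum_type,
      mul_add, add_comm]
    simpa using add_le_add lower upper
  · refine l2_opNorm_le_of_sum_norm_sq_mulVec_le (norm_nonneg _) fun v => ?_
    have bound := sum_norm_sq_mulVec_le (hermitianDilation B) (Sum.elim 0 v)
    rw [hermitianDilation_apply, fromBlocks_mulVec, Fintype.sum_sum_type,
      Fintype.sum_sum_type] at bound
    simpa [hermitianDilation_apply] using bound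

omit [DecidableEq m] in
lemma re_trace_hermitianDilation_mul_self_le (B : Matrix m n 𝕜) :
    re (trace (hermitianDilation B * hermitianDilation B)) ≤ 2 * Fintype.card n * ‖B‖ ^ 2 := by
  have trace_eq : trace (hermitianDilation B * hermitianDilation B) =
      trace (B * Bᴴ) + trace (Bᴴ * B) := by
    simp [hermitianDilation_apply, fromBlocks_multiply, trace, Fintype.sum_sum_type]
  rw [trace_eq, trace_mul_comm, map_add]
  linarith [re_trace_conjTranspose_mul_self_le B]

end Dilation

section Maurey

variable {𝕜 ι κ m n : Type*} [RCLike 𝕜] [Fintype ι] [Fintype κ] [Fintype m] [Fintype n]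
  [DecidableEq n] {w : ι → ℝ} {B : ι → Matrix m n 𝕜} {ρ t : ℝ}

lemma exists_norm_centeredSum_pow_le (hw : w ∈ stdSimplex ℝ ι) (hρ : ∀ i j, ‖B i - B j‖ ≤ ρ)
    (k : ℕ) : ∃ f : κ → ι, ‖centeredSum w B f‖ ^ (2 * (k + 1)) ≤
      2 * Fintype.card n * ((2 * k + 1) * Fintype.card κ * ρ ^ 2) ^ (k + 1) := by
  classical
  have moment := iidMean_re_trace_centeredSum_pow_le (κ := κ) (H := hermitianDilation ∘ B)
    (τ := 2 * Fintype.card n) hw (fun i => isHermitian_hermitianDilation (B i))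
    (fun i j => by
      simp only [Function.comp_apply, ← map_sub, norm_hermitianDilation]
      exact hρ i j)
    (fun i j => by
      simp only [Function.comp_apply, ← map_sub]
      refine (re_trace_hermitianDilation_mul_self_le _).trans ?_
      gcongr
      exact hρ i j)
    (by positivity) k
  obtain ⟨f, hf⟩ := exists_le_of_iidMean_le hw moment
  refine ⟨f, le_trans ?_ hf⟩
  rw [← map_centeredSum, ← norm_hermitianDilation]
  exact norm_pow_le_re_trace_pow (isHermitian_hermitianDilation _) (even_two_mul _) (by omega)

lemma exists_two_mul_le_six_pow {N : ℕ} (hN : 2 ≤ N) :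
    ∃ k : ℕ, 2 * (N : ℝ) ≤ 6 ^ (k + 1) ∧ (k + 1 : ℝ) ≤ 5 / 2 * Real.log N := by
  have log_two_le : Real.log 2 ≤ Real.log N := Real.log_le_log (by norm_num) (by exact_mod_cast hN)
  have log_two_gt := Real.log_two_gt_d9
  obtain ⟨k, hk⟩ : ∃ k, ⌈Real.log N⌉₊ = k + 1 :=
    Nat.exists_eq_succ_of_ne_zero (Nat.ceil_pos.2 (by linarith)).ne'
  have le_ceil := Nat.le_ceil (Real.log N)
  have ceil_lt := Nat.ceil_lt_add_one (a := Real.log N) (by linarith)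
  rw [hk] at le_ceil ceil_lt
  push_cast at le_ceil ceil_lt
  refine ⟨k, ?_, by linarith⟩
  have le_three_pow : (N : ℝ) ≤ 3 ^ (k + 1) := by
    calc (N : ℝ) = Real.exp (Real.log N) := (Real.exp_log (by positivity)).symm
      _ ≤ Real.exp ((k + 1 : ℕ) : ℝ) := Real.exp_le_exp.2 (by exact_mod_cast le_ceil)
      _ = Real.exp 1 ^ (k + 1) := (Real.exp_one_pow _).symm
      _ ≤ 3 ^ (k + 1) := by
        gcongr
        exact Real.exp_one_lt_three.le
  calc 2 * (N : ℝ) ≤ 2 ^ (k + 1) * 3 ^ (k + 1) := by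
        gcongr
        exact le_self_pow₀ one_le_two (by omega)
    _ = 6 ^ (k + 1) := by rw [← mul_pow]; norm_num

lemma exists_norm_centeredSum_sq_le (hw : w ∈ stdSimplex ℝ ι) (hρ : ∀ i j, ‖B i - B j‖ ≤ ρ)
    (hn : 2 ≤ Fintype.card n) : ∃ f : κ → ι,
      ‖centeredSum w B f‖ ^ 2 ≤ 30 * ρ ^ 2 * Real.log (Fintype.card n) * Fintype.card κ := by
  obtain ⟨k, dim_le, hk⟩ := exists_two_mul_le_six_pow hn
  obtain ⟨f, hf⟩ := exists_norm_centeredSum_pow_le (κ := κ) hw hρ k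
  refine ⟨f, le_of_pow_le_pow_left₀ (n := k + 1) (by omega) (by positivity) ?_⟩
  calc (‖centeredSum w B f‖ ^ 2) ^ (k + 1)
      ≤ 6 ^ (k + 1) * ((2 * k + 1) * Fintype.card κ * ρ ^ 2) ^ (k + 1) := by
        rw [← pow_mul]
        exact hf.trans (by gcongr)
    _ = (6 * ((2 * k + 1) * Fintype.card κ * ρ ^ 2)) ^ (k + 1) := (mul_pow _ _ _).symm
    _ ≤ (6 * (5 * Real.log (Fintype.card n) * Fintype.card κ * ρ ^ 2)) ^ (k + 1) := by
        gcongr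
        linarith
    _ = _ := by ring

lemma sum_smul_sub_inv_smul_sum_eq {E : Type*} [AddCommGroup E] [Module ℝ E] [Nonempty κ]
    (w : ι → ℝ) (v : ι → E) (f : κ → ι) :
    ∑ i, w i • v i - (Fintype.card κ : ℝ)⁻¹ • ∑ l, v (f l) =
      -((Fintype.card κ : ℝ)⁻¹ • centeredSum w v f) := by
  rw [centeredSum, Finset.sum_sub_distrib, Finset.sum_const, Finset.card_univ, smul_sub,
    ← Nat.cast_smul_eq_nsmul ℝ, inv_smul_smul₀ (by positivity), neg_sub]

theorem exists_norm_sum_smul_sub_average_le [Nonempty κ] (hw : w ∈ stdSimplex ℝ ι)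
    (hρ : ∀ i j, ‖B i - B j‖ ≤ ρ) (hn : 2 ≤ Fintype.card n) (ht : 0 ≤ t)
    (hκ : 30 * ρ ^ 2 * Real.log (Fintype.card n) ≤ Fintype.card κ * t ^ 2) :
    ∃ f : κ → ι, ‖∑ i, w i • B i - (Fintype.card κ : ℝ)⁻¹ • ∑ l, B (f l)‖ ≤ t := by
  obtain ⟨f, hf⟩ := exists_norm_centeredSum_sq_le (κ := κ) hw hρ hn
  have norm_le : ‖centeredSum w B f‖ ≤ Fintype.card κ * t := by
    refine le_of_sq_le_sq (hf.trans ?_) (by positivity)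
    calc _ ≤ Fintype.card κ * t ^ 2 * Fintype.card κ := by gcongr
      _ = (Fintype.card κ * t) ^ 2 := by ring
  refine ⟨f, ?_⟩
  rw [sum_smul_sub_inv_smul_sum_eq, norm_neg, RCLike.real_smul_eq_coe_smul (K := 𝕜), norm_smul,
    RCLike.norm_ofReal, abs_of_nonneg (by positivity), inv_mul_le_iff₀ (by positivity)]
  exact norm_le

lemma convexHull_range_eq_image_stdSimplex {E : Type*} [AddCommGroup E] [Module ℝ E] (v : ι → E) :
    convexHull ℝ (Set.range v) = Fintype.linearCombination ℝ v '' stdSimplex ℝ ι := by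
  classical
  rw [← convexHull_rangle_single_eq_stdSimplex, LinearMap.image_convexHull, ← Set.range_comp]
  congr 2 with i
  simp

theorem exists_net_convexHull_range [Nonempty ι] [Nonempty κ] (hρ : ∀ i j, ‖B i - B j‖ ≤ ρ)
    (hn : 2 ≤ Fintype.card n) (ht : 0 ≤ t)
    (hκ : 30 * ρ ^ 2 * Real.log (Fintype.card n) ≤ Fintype.card κ * t ^ 2) :
    ∃ 𝒩 : Finset (Matrix m n 𝕜), (∀ A ∈ convexHull ℝ (Set.range B), ∃ A' ∈ 𝒩, ‖A - A'‖ ≤ t) ∧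
      Real.log 𝒩.card ≤ Fintype.card κ * Real.log (Fintype.card ι) := by
  classical
  refine ⟨Finset.univ.image fun f : κ → ι => (Fintype.card κ : ℝ)⁻¹ • ∑ l, B (f l),
    fun A hA => ?_, ?_⟩
  · obtain ⟨w, hw, rfl⟩ : ∃ w ∈ stdSimplex ℝ ι, ∑ i, w i • B i = A := by
      rwa [convexHull_range_eq_image_stdSimplex] at hA
    obtain ⟨f, hf⟩ := exists_norm_sum_smul_sub_average_le hw hρ hn ht hκ
    exact ⟨_, Finset.mem_image_of_mem _ (Finset.mem_univ f), hf⟩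
  · rw [← Real.log_pow]
    refine Real.log_le_log ?_ ?_
    · exact_mod_cast (Finset.univ_nonempty.image _).card_pos
    · exact_mod_cast Finset.card_image_le.trans_eq (by simp)

end Maurey

section L1Ball

variable {κ m n : Type*} [Fintype κ] [DecidableEq κ] [Nonempty κ]

lemma mem_convexHull_range_two_mul_I_pow {z : ℂ} (hz : ‖z‖ ≤ 1) :
    z ∈ convexHull ℝ (Set.range fun a : Fin 4 => 2 * Complex.I ^ (a : ℕ)) := by
  have ⟨re_lower, re_upper⟩ := abs_le.1 ((Complex.abs_re_le_norm z).trans hz)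
  have ⟨im_lower, im_upper⟩ := abs_le.1 ((Complex.abs_im_le_norm z).trans hz)
  rw [convexHull_range_eq_image_stdSimplex]
  refine ⟨![(1 + z.re) / 4, (1 + z.im) / 4, (1 - z.re) / 4, (1 - z.im) / 4], ⟨fun a => ?_, ?_⟩, ?_⟩
  · fin_cases a <;> simp <;> linarith
  · simp [Fin.sum_univ_four]
    ring
  · apply Complex.ext <;>
      simp [Fintype.linearCombination_apply, Fin.sum_univ_four, pow_succ] <;> ring

omit [Fintype κ] [Nonempty κ] in
lemma single_mem_convexHull_range_single (k : κ) (r : ℝ) {u : ℂ} (hu : ‖u‖ ≤ 1) :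
    (Pi.single k (r * u) : κ → ℂ) ∈ convexHull ℝ
      (Set.range fun i : κ × Fin 4 => Pi.single i.1 (r * (2 * Complex.I ^ (i.2 : ℕ)))) := by
  let φ : ℂ →ₗ[ℝ] κ → ℂ := LinearMap.single ℝ (fun _ => ℂ) k ∘ₗ LinearMap.mulLeft ℝ (r : ℂ)
  have mem_image := Set.mem_image_of_mem φ (mem_convexHull_range_two_mul_I_pow hu)
  rw [LinearMap.image_convexHull, ← Set.range_comp] at mem_image
  refine convexHull_mono ?_ mem_image
  rintro _ ⟨a, rfl⟩
  exact ⟨(k, a), rfl⟩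

lemma mem_convexHull_range_single {x : κ → ℂ} {r : ℝ} (hr : 0 < r) (hx : ∑ k, ‖x k‖ ≤ r) :
    x ∈ convexHull ℝ
      (Set.range fun i : κ × Fin 4 => Pi.single i.1 (r * (2 * Complex.I ^ (i.2 : ℕ)))) := by
  -- Padding the moduli to total mass exactly `r` turns `x` into a convex combination.
  let b : κ → ℝ := fun k => ‖x k‖ + (r - ∑ j, ‖x j‖) / Fintype.card κ
  have norm_le_b (k : κ) : ‖x k‖ ≤ b k :=
    le_add_of_nonneg_right (div_nonneg (sub_nonneg.2 hx) (Nat.cast_nonneg _))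
  have b_nonneg (k : κ) : 0 ≤ b k := (norm_nonneg _).trans (norm_le_b k)
  have sum_b : ∑ k, b k = r := by
    simp only [b, Finset.sum_add_distrib, Finset.sum_const, Finset.card_univ, nsmul_eq_mul]
    rw [mul_div_cancel₀ _ (by positivity), add_sub_cancel]
  have combination : ∑ k, (b k / r) • (Pi.single k (r * (x k / b k)) : κ → ℂ) = x := by
    have term (k : κ) : (b k / r) • (r * (x k / b k)) = x k := by
      rcases (b_nonneg k).eq_or_lt with hb | hb
      · have x_eq_zero : x k = 0 := norm_le_zero_iff.1 ((norm_le_b k).trans_eq hb.symm)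
        rw [x_eq_zero, zero_div, mul_zero, smul_zero]
      · have hr' : (r : ℂ) ≠ 0 := Complex.ofReal_ne_zero.2 hr.ne'
        have hb' : (b k : ℂ) ≠ 0 := Complex.ofReal_ne_zero.2 hb.ne'
        rw [Complex.real_smul]
        push_cast
        field_simp
    simp only [← Pi.single_smul, term]
    exact Finset.univ_sum_single x
  rw [← combination]
  refine (convex_convexHull ℝ _).sum_mem (fun k _ => div_nonneg (b_nonneg k) hr.le) ?_
    fun k _ => single_mem_convexHull_range_single k r ?_
  · rw [← Finset.sum_div, sum_b, div_self hr.ne']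
  · rw [norm_div, Complex.norm_real, Real.norm_of_nonneg (b_nonneg k)]
    exact div_le_one_of_le₀ (norm_le_b k) (b_nonneg k)

variable [Fintype m] [Fintype n] [DecidableEq n] {T : (κ → ℂ) →ₗ[ℝ] Matrix m n ℂ} {ρ r t : ℝ}

omit [Nonempty κ] in
lemma norm_le_mul_sum_norm_of_norm_single_le (hT : ∀ k c, ‖T (Pi.single k c)‖ ≤ ρ * ‖c‖)
    (x : κ → ℂ) : ‖T x‖ ≤ ρ * ∑ k, ‖x k‖ := by
  rw [← Finset.univ_sum_single x, map_sum, Finset.mul_sum]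
  refine norm_sum_le_of_le _ fun k _ => ?_
  simpa using hT k (x k)

lemma exists_net_image_l1Ball_of_pos (hT : ∀ k c, ‖T (Pi.single k c)‖ ≤ ρ * ‖c‖)
    (hn : 2 ≤ Fintype.card n) (hr : 0 < r) (ht : 0 < t) {L : ℕ} (hL0 : 0 < L)
    (hL : 480 * (r * ρ) ^ 2 * Real.log (Fintype.card n) ≤ L * t ^ 2) :
    ∃ 𝒩 : Finset (Matrix m n ℂ), (∀ x : κ → ℂ, ∑ k, ‖x k‖ ≤ r → ∃ A' ∈ 𝒩, ‖T x - A'‖ ≤ t) ∧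
      Real.log 𝒩.card ≤ L * Real.log (4 * Fintype.card κ) := by
  have : Nonempty (Fin L) := Fin.pos_iff_nonempty.1 hL0
  let v (i : κ × Fin 4) : κ → ℂ := Pi.single i.1 (r * (2 * Complex.I ^ (i.2 : ℕ)))
  have norm_vertex (i) : ‖T (v i)‖ ≤ 2 * (r * ρ) := by
    refine (hT _ _).trans_eq ?_
    simp only [norm_mul, norm_pow, Complex.norm_I, one_pow, mul_one, Complex.norm_real,
      Real.norm_of_nonneg hr.le, Complex.norm_ofNat]
    ring
  have diam (i j) : ‖T (v i) - T (v j)‖ ≤ 4 * (r * ρ) :=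
    (norm_sub_le _ _).trans (by linarith [norm_vertex i, norm_vertex j])
  obtain ⟨𝒩, cover, card⟩ := exists_net_convexHull_range (κ := Fin L) diam hn ht.le (by
    rw [Fintype.card_fin]
    exact hL.trans_eq' (by ring))
  refine ⟨𝒩, fun x hx => cover _ ?_, ?_⟩
  · have mem_image := Set.mem_image_of_mem T (mem_convexHull_range_single hr hx)
    rwa [LinearMap.image_convexHull, ← Set.range_comp] at mem_image
  · simpa [mul_comm] using card

theorem exists_net_image_l1Ball (hT : ∀ k c, ‖T (Pi.single k c)‖ ≤ ρ * ‖c‖)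
    (hn : 2 ≤ Fintype.card n) (ht : 0 < t) :
    ∃ 𝒩 : Finset (Matrix m n ℂ), (∀ x : κ → ℂ, ∑ k, ‖x k‖ ≤ r → ∃ A' ∈ 𝒩, ‖T x - A'‖ ≤ t) ∧
      Real.log 𝒩.card ≤ 500 * (r * ρ) ^ 2 * t⁻¹ ^ 2 * Real.log (Fintype.card n) *
        Real.log (4 * Fintype.card κ) := by
  have log_two_le : Real.log 2 ≤ Real.log (Fintype.card n) :=
    Real.log_le_log (by norm_num) (by exact_mod_cast hn)
  have log_two_gt := Real.log_two_gt_d9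
  have log_pos : 0 < Real.log (Fintype.card n) := by linarith
  have log_nonneg : 0 ≤ Real.log (4 * Fintype.card κ) := by
    have card_pos := Fintype.card_pos (α := κ)
    exact Real.log_nonneg (by exact_mod_cast (by omega : 1 ≤ 4 * Fintype.card κ))
  have hρ : 0 ≤ ρ := by
    simpa using (norm_nonneg _).trans (hT (Classical.arbitrary κ) 1)
  rcases le_or_gt (r * ρ) t with small | large
  · refine ⟨{0}, fun x hx => ⟨0, Finset.mem_singleton_self 0, ?_⟩, ?_⟩
    · rw [sub_zero]
      calc ‖T x‖ ≤ ρ * ∑ k, ‖x k‖ := norm_le_mul_sum_norm_of_norm_single_le hT x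
        _ ≤ ρ * r := by gcongr
        _ ≤ t := by rwa [mul_comm]
    · rw [Finset.card_singleton, Nat.cast_one, Real.log_one]
      positivity
  · have hr : 0 < r := pos_of_mul_pos_left (ht.trans large) hρ
    set Q := (r * ρ) ^ 2 * t⁻¹ ^ 2 with hQ
    have one_le_Q : 1 ≤ Q := by
      rw [hQ, ← mul_pow, ← div_eq_mul_inv]
      exact one_le_pow₀ ((one_le_div ht).2 large.le)
    have sq_eq : (r * ρ) ^ 2 = Q * t ^ 2 := by
      rw [hQ, inv_pow, inv_mul_cancel_right₀ (by positivity)]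
    obtain ⟨𝒩, cover, card⟩ := exists_net_image_l1Ball_of_pos hT hn hr ht
      (L := ⌈480 * Q * Real.log (Fintype.card n)⌉₊) (Nat.ceil_pos.2 (by positivity)) (by
        calc _ = 480 * Q * Real.log (Fintype.card n) * t ^ 2 := by rw [sq_eq]; ring
          _ ≤ _ := by gcongr; exact Nat.le_ceil _)
    refine ⟨𝒩, cover, card.trans ?_⟩
    rw [mul_assoc 500, ← hQ]
    gcongr
    have ceil_lt := Nat.ceil_lt_add_one (a := 480 * Q * Real.log (Fintype.card n)) (by positivity)
    nlinarith

end L1Ball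

section Sparse

lemma l2norm_sq {ι : Type*} [Fintype ι] (v : ι → ℂ) : l2norm v ^ 2 = ∑ i, ‖v i‖ ^ 2 :=
  Real.sq_sqrt (by positivity)

lemma opNorm22_le_norm {m n : Type*} [Fintype m] [Fintype n] [DecidableEq n] (A : Matrix m n ℂ) :
    opNorm22 A ≤ ‖A‖ := by
  refine csSup_le ⟨_, 0, by simp [l2norm], rfl⟩ ?_
  rintro _ ⟨z, hz, rfl⟩
  have norm_mulVec_le : l2norm (A *ᵥ z) ≤ ‖A‖ * l2norm z := by
    refine le_of_sq_le_sq ?_ (mul_nonneg (norm_nonneg A) (Real.sqrt_nonneg _))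
    rw [mul_pow, l2norm_sq, l2norm_sq]
    exact sum_norm_sq_mulVec_le A z
  exact norm_mulVec_le.trans (mul_le_of_le_one_right (norm_nonneg A) hz)

lemma sum_norm_le_sqrt_of_sparsity_le {n s : ℕ} {x : Fin n → ℂ} (hx : l2norm x ≤ 1)
    (hs : sparsity x ≤ s) : ∑ k, ‖x k‖ ≤ √s := by
  refine Real.le_sqrt_of_sq_le ?_
  set S := (Set.toFinite (Function.support x)).toFinset with hS
  have sum_support : ∑ k ∈ S, ‖x k‖ = ∑ k, ‖x k‖ :=
    Finset.sum_subset (Finset.subset_univ _) fun k _ hk => by simpa [hS] using hk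
  calc (∑ k, ‖x k‖) ^ 2 = (∑ k ∈ S, ‖x k‖) ^ 2 := by rw [sum_support]
    _ ≤ S.card * ∑ k ∈ S, ‖x k‖ ^ 2 := sq_sum_le_card_mul_sum_sq
    _ ≤ s * ∑ k, ‖x k‖ ^ 2 := by
        gcongr
        · exact hs
        · exact Finset.subset_univ _
    _ ≤ s * 1 := by
        gcongr
        rw [← l2norm_sq]
        exact pow_le_one₀ (Real.sqrt_nonneg _) hx
    _ = s := mul_one _

theorem stmt10_general {m : Type*} [Fintype m] {n s : ℕ} (hn : 2 ≤ n)
    (T : (Fin n → ℂ) →ₗ[ℝ] Matrix m (Fin n) ℂ) {ρ t : ℝ}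
    (hT : ∀ k c, ‖T (Pi.single k c)‖ ≤ ρ * ‖c‖) (ht : 0 < t) :
    ∃ 𝒩 : Finset (Matrix m (Fin n) ℂ),
      (∀ x : Fin n → ℂ, l2norm x ≤ 1 → sparsity x ≤ s → ∃ A' ∈ 𝒩, opNorm22 (T x - A') ≤ t) ∧
      Real.log 𝒩.card ≤ 500 * (s * ρ ^ 2) * t⁻¹ ^ 2 * Real.log n * Real.log (4 * n) := by
  have : Nonempty (Fin n) := ⟨⟨0, by omega⟩⟩
  obtain ⟨𝒩, cover, card⟩ := exists_net_image_l1Ball (r := √s) hT (by rwa [Fintype.card_fin])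
    ht
  refine ⟨𝒩, fun x hx hs => ?_, ?_⟩
  · obtain ⟨A', hA', dist_le⟩ := cover x (sum_norm_le_sqrt_of_sparsity_le hx hs)
    exact ⟨A', hA', (opNorm22_le_norm _).trans dist_le⟩
  · rwa [mul_pow, Real.sq_sqrt s.cast_nonneg, Fintype.card_fin] at card

end Sparse

section Amat

variable {G : Type*} [Group G] [Fintype G] {n : ℕ} (π : G →* Matrix.unitaryGroup (Fin n) ℂ)
  (Ω : Finset G)

/-- The conjugate-linear map `x ↦ A_x`, regarded as a real-linear map. -/
noncomputable def AmatLinearMap : (Fin n → ℂ) →ₗ[ℝ] Matrix Ω (Fin n) ℂ where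
  toFun := Amat π Ω
  map_add' x y := by
    ext ω j
    simp [Amat, mulVec_add, mul_add]
  map_smul' a x := by
    ext ω j
    simp [Amat, mulVec_smul, mul_left_comm]

lemma Amat_single_mulVec (k : Fin n) (c : ℂ) (z : Fin n → ℂ) (ω : Ω) :
    (Amat π Ω (Pi.single k c) *ᵥ z) ω =
      1 / (√Ω.card : ℂ) * conj c * ((π ω : Matrix (Fin n) (Fin n) ℂ) *ᵥ z) k := by
  simp only [mulVec, dotProduct, Amat, Finset.mul_sum]
  refine Finset.sum_congr rfl fun j _ => ?_
  rw [Finset.sum_eq_single k]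
  · simp
    ring
  · intro i _ hi
    simp [hi]
  · simp

variable {π Ω} {C : ℝ}

lemma norm_AmatLinearMap_single_le (hC0 : 0 ≤ C)
    (hC : ∀ (y : Fin n → ℂ) (j : Fin n),
      ∑ ω ∈ Ω, ‖((π ω : Matrix (Fin n) (Fin n) ℂ) *ᵥ y) j‖ ^ 2 ≤ C * l2norm y ^ 2)
    (k : Fin n) (c : ℂ) :
    ‖AmatLinearMap π Ω (Pi.single k c)‖ ≤ √(C / Ω.card) * ‖c‖ := by
  refine l2_opNorm_le_of_sum_norm_sq_mulVec_le (by positivity) fun z => ?_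
  have entry (ω : Ω) : ‖(Amat π Ω (Pi.single k c) *ᵥ z) ω‖ ^ 2 =
      ‖c‖ ^ 2 / Ω.card * ‖((π ω : Matrix (Fin n) (Fin n) ℂ) *ᵥ z) k‖ ^ 2 := by
    rw [Amat_single_mulVec, norm_mul, norm_mul, norm_div, norm_one, RCLike.norm_conj,
      Complex.norm_real, Real.norm_of_nonneg (Real.sqrt_nonneg _), mul_pow, mul_pow, div_pow,
      Real.sq_sqrt (Nat.cast_nonneg _)]
    ring
  calc ∑ ω, ‖(Amat π Ω (Pi.single k c) *ᵥ z) ω‖ ^ 2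
      = ‖c‖ ^ 2 / Ω.card * ∑ ω ∈ Ω, ‖((π ω : Matrix (Fin n) (Fin n) ℂ) *ᵥ z) k‖ ^ 2 := by
        simp only [entry]
        rw [← Finset.mul_sum,
          Finset.sum_coe_sort Ω fun ω => ‖((π ω : Matrix (Fin n) (Fin n) ℂ) *ᵥ z) k‖ ^ 2]
    _ ≤ ‖c‖ ^ 2 / Ω.card * (C * ∑ j, ‖z j‖ ^ 2) := by
        rw [← l2norm_sq]
        gcongr
        exact hC z k
    _ = (√(C / Ω.card) * ‖c‖) ^ 2 * ∑ j, ‖z j‖ ^ 2 := by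
        rw [mul_pow, Real.sq_sqrt (by positivity)]
        ring

end Amat

end Net

theorem stmt10 :
    ∃ c₁ : ℝ, 0 < c₁ ∧
      ∀ (G : Type) (_ : Group G) (_ : Fintype G) (n m s : ℕ), 2 ≤ n →
        ∀ (π : G →* Matrix.unitaryGroup (Fin n) ℂ) (Ω : Finset G),
          Ω.card = m → 1 ≤ m →
          ∀ C : ℝ, 0 < C →
            (∀ (y : Fin n → ℂ) (j : Fin n),
              ∑ ω ∈ Ω, ‖((π ω : Matrix (Fin n) (Fin n) ℂ).mulVec y) j‖ ^ 2 ≤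
                C * (l2norm y) ^ 2) →
            1 ≤ s → s ≤ n →
            ∀ t : ℝ, 0 < t →
              ∃ 𝒩 : Finset (Matrix ↥Ω (Fin n) ℂ),
                (∀ x : Fin n → ℂ, l2norm x ≤ 1 → sparsity x ≤ s →
                    ∃ A' ∈ 𝒩, opNorm22 (Amat π Ω x - A') ≤ t) ∧
                Real.log 𝒩.card ≤
                  c₁ * (s * C / m) * t⁻¹ ^ 2 * Real.log n * Real.log (4 * n) := by
  refine ⟨500, by norm_num, ?_⟩
  rintro G _ _ n m s hn π Ω rfl - C hC hsum - - t ht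
  have net := stmt10_general (s := s) hn (AmatLinearMap π Ω)
    (norm_AmatLinearMap_single_le hC.le hsum) ht
  rwa [Real.sq_sqrt (by positivity), ← mul_div_assoc] at net
end
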